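/- Per-agent single-iteration inequality for a convex smooth objective (inequality (60) in the proof of Lemma 3). Let E be a finite-dimensional real inner product space, let f : E → ℝ be convex and differentiable with L-Lipschitz gradient for some L ≥ 0, let ρ > 0 and η > 0 with 1/η > L, and let w̃₀, w̄₀, γ₀, ξ ∈ E. Define w̃₁ = (ρ + 1/η)⁻¹·(−∇f(w̃₀) + γ₀ + ρ·w̄₀ + (1/η)·w̃₀) + ξ, let w̄₁ ∈ E be arbitrary, and set γ₁ = γ₀ − ρ·(w̃₁ − w̄₁). Then for every w ∈ E: f(w̃₁) − f(w) + ⟨w̃₁ − w, −γ₁⟩ ≤ ((ρ + 1/η)²/(2·(1/η − L)))·‖ξ‖² − (ρ + 1/η)·⟨ξ, w − w̃₀⟩ + (1/(2η))·(‖w − w̃₀‖² − ‖w − w̃₁‖²) + (ρ/2)·(‖w − w̄₀‖² − ‖w − w̄₁‖²) + (1/(2ρ))·‖γ₁ − γ₀‖². -/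

import Mathlib

open scoped RealInnerProductSpace

theorem aux_line {E : Type*} [NormedAddCommGroup E] [InnerProductSpace ℝ E] [FiniteDimensional ℝ E]
    (f : E → ℝ) (hdiff : Differentiable ℝ f) (x d : E) (t : ℝ) :
    HasDerivAt (fun t : ℝ => f (x + t • d)) ⟪gradient f (x + t • d), d⟫ t := by
  have h1 := (hdiff (x + t • d)).hasGradientAt.hasFDerivAt
  have h2 : HasDerivAt (fun t : ℝ => x + t • d) d t := by
    simpa using ((hasDerivAt_id t).smul_const d).const_add x
  have h3 := h1.comp_hasDerivAt t h2
  simpa [Function.comp_def] using h3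

theorem aux_descent {E : Type*} [NormedAddCommGroup E] [InnerProductSpace ℝ E]
    [FiniteDimensional ℝ E]
    (f : E → ℝ) (L : ℝ) (hdiff : Differentiable ℝ f)
    (hlip : ∀ x y : E, ‖gradient f x - gradient f y‖ ≤ L * ‖x - y‖) (x d : E) :
    f (x + d) ≤ f x + ⟪gradient f x, d⟫ + L / 2 * ‖d‖ ^ 2 := by
  have hd : ∀ t : ℝ, HasDerivAt
      (fun t : ℝ => f (x + t • d) - (t * ⟪gradient f x, d⟫ + t ^ 2 * (L / 2 * ‖d‖ ^ 2)))
      (⟪gradient f (x + t • d), d⟫ - (⟪gradient f x, d⟫ + 2 * t * (L / 2 * ‖d‖ ^ 2))) t := by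
    intro t
    refine (aux_line f hdiff x d t).sub (HasDerivAt.add ?_ ?_)
    · simpa using (hasDerivAt_id t).mul_const ⟪gradient f x, d⟫
    · simpa using (hasDerivAt_pow 2 t).mul_const (L / 2 * ‖d‖ ^ 2)
  have hanti := antitoneOn_of_deriv_nonpos (convex_Icc (0 : ℝ) 1)
    (fun t _ => (hd t).continuousAt.continuousWithinAt)
    (fun t _ => (hd t).differentiableAt.differentiableWithinAt)
    (by
      intro t ht
      rw [interior_Icc] at ht
      rw [(hd t).deriv]
      have h1 := hlip (x + t • d) x
      have h2 := real_inner_le_norm (gradient f (x + t • d) - gradient f x) d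
      rw [inner_sub_left] at h2
      rw [add_sub_cancel_left, norm_smul, Real.norm_of_nonneg ht.1.le] at h1
      have h3 := mul_le_mul_of_nonneg_right h1 (norm_nonneg d)
      nlinarith)
  have := hanti (Set.left_mem_Icc.2 zero_le_one) (Set.right_mem_Icc.2 zero_le_one) zero_le_one
  simp at this ⊢
  linarith

theorem aux_convex {E : Type*} [NormedAddCommGroup E] [InnerProductSpace ℝ E]
    [FiniteDimensional ℝ E]
    (f : E → ℝ) (hf : ConvexOn ℝ Set.univ f) (hdiff : Differentiable ℝ f) (x d : E) :
    f x + ⟪gradient f x, d⟫ ≤ f (x + d) := by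
  have hc : ConvexOn ℝ Set.univ (fun t : ℝ => f (x + t • d)) := by
    have := hf.comp_affineMap (AffineMap.lineMap x (x + d) : ℝ →ᵃ[ℝ] E)
    simpa [Function.comp_def, AffineMap.lineMap_apply, add_comm] using this
  have h0 := aux_line f hdiff x d 0
  have := hc.le_slope_of_hasDerivAt (Set.mem_univ 0) (Set.mem_univ 1) zero_lt_one h0
  simp [slope_def_field] at this ⊢
  linarith

/-- Per-agent single-iteration inequality for a convex smooth objective
(inequality (60) in the proof of Lemma 3). -/
theorem dp_admm_per_agent_smooth
    {E : Type*} [NormedAddCommGroup E] [InnerProductSpace ℝ E] [FiniteDimensional ℝ E]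
    (f : E → ℝ) (L : ℝ) (hL : 0 ≤ L)
    (hf : ConvexOn ℝ Set.univ f) (hdiff : Differentiable ℝ f)
    (hlip : ∀ x y : E, ‖gradient f x - gradient f y‖ ≤ L * ‖x - y‖)
    (ρ η : ℝ) (hρ : 0 < ρ) (hη : 0 < η) (hηL : L < 1 / η)
    (wt0 wbar0 γ0 ξ : E)
    (wt1 : E)
    (hwt1 : wt1 = (ρ + 1 / η)⁻¹ •
      (-(gradient f wt0) + γ0 + ρ • wbar0 + (1 / η) • wt0) + ξ)
    (wbar1 : E) (γ1 : E) (hγ1 : γ1 = γ0 - ρ • (wt1 - wbar1)) :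
    ∀ w : E,
      f wt1 - f w + ⟪wt1 - w, -γ1⟫ ≤
        (ρ + 1 / η) ^ 2 / (2 * (1 / η - L)) * ‖ξ‖ ^ 2 - (ρ + 1 / η) * ⟪ξ, w - wt0⟫
        + 1 / (2 * η) * (‖w - wt0‖ ^ 2 - ‖w - wt1‖ ^ 2)
        + ρ / 2 * (‖w - wbar0‖ ^ 2 - ‖w - wbar1‖ ^ 2)
        + 1 / (2 * ρ) * ‖γ1 - γ0‖ ^ 2 := by
  intro w
  have h1 := aux_descent f L hdiff hlip wt0 (wt1 - wt0)
  have h2 := aux_convex f hf hdiff wt0 (w - wt0)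
  rw [add_sub_cancel] at h1 h2
  have hη2 : 1 / (2 * η) = (1 / η) / 2 := by field_simp
  rw [hη2]
  have ha : 0 < 1 / η := by positivity
  generalize 1 / η = a at *
  have hc : 0 < ρ + a := by positivity
  have hg : gradient f wt0 = γ0 + ρ • (wbar0 - wt1) + a • (wt0 - wt1) + (ρ + a) • ξ := by
    have h : (ρ + a) • (wt1 - ξ) = -(gradient f wt0) + γ0 + ρ • wbar0 + a • wt0 := by
      rw [hwt1, add_sub_cancel_right, smul_inv_smul₀ hc.ne']
    have h' : gradient f wt0 = γ0 + ρ • wbar0 + a • wt0 - (ρ + a) • (wt1 - ξ) := by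
      rw [h]; abel
    rw [h']; module
  have hγn : 1 / (2 * ρ) * ‖γ1 - γ0‖ ^ 2 = ρ / 2 * ‖wt1 - wbar1‖ ^ 2 := by
    have : γ1 - γ0 = -(ρ • (wt1 - wbar1)) := by rw [hγ1]; abel
    rw [this, norm_neg, norm_smul, Real.norm_of_nonneg hρ.le]
    field_simp
  have hy : (ρ + a) * ⟪ξ, wt1 - wt0⟫ ≤
      (ρ + a) ^ 2 / (2 * (a - L)) * ‖ξ‖ ^ 2 + (a - L) / 2 * ‖wt1 - wt0‖ ^ 2 := by
    have hs : 0 < a - L := sub_pos.2 hηL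
    have h3 := mul_le_mul_of_nonneg_left (real_inner_le_norm ξ (wt1 - wt0)) hc.le
    have h4 : (ρ + a) ^ 2 / (2 * (a - L)) * ‖ξ‖ ^ 2 + (a - L) / 2 * ‖wt1 - wt0‖ ^ 2
        - (ρ + a) * (‖ξ‖ * ‖wt1 - wt0‖)
        = ((ρ + a) * ‖ξ‖ - (a - L) * ‖wt1 - wt0‖) ^ 2 / (2 * (a - L)) := by
      field_simp; ring
    have h5 : 0 ≤ ((ρ + a) * ‖ξ‖ - (a - L) * ‖wt1 - wt0‖) ^ 2 / (2 * (a - L)) := by positivity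
    linarith
  have hz : 0 ≤ ρ / 2 * ‖wt1 - wbar0‖ ^ 2 := by positivity
  have key : ⟪gradient f wt0, wt1 - wt0⟫ - ⟪gradient f wt0, w - wt0⟫ + ⟪wt1 - w, -γ1⟫
      = a / 2 * (‖w - wt0‖ ^ 2 - ‖w - wt1‖ ^ 2 - ‖wt1 - wt0‖ ^ 2)
        + ρ / 2 * (‖w - wbar0‖ ^ 2 - ‖w - wbar1‖ ^ 2 + ‖wt1 - wbar1‖ ^ 2 - ‖wt1 - wbar0‖ ^ 2)
        + (ρ + a) * ⟪ξ, wt1 - wt0⟫ - (ρ + a) * ⟪ξ, w - wt0⟫ := by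
    rw [hg, hγ1]
    clear * -
    simp only [← real_inner_self_eq_norm_sq, inner_sub_left, inner_sub_right, inner_add_left,
      inner_add_right, inner_smul_left, inner_smul_right, inner_neg_right, inner_neg_left,
      RCLike.conj_to_real]
    simp only [real_inner_comm w, real_inner_comm wt1 wt0, real_inner_comm wt1 wbar0,
      real_inner_comm wt1 wbar1, real_inner_comm wt1 γ0]
    ring
  rw [hγn]
  linarith
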